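/- Let R be the t×n Hankel determinantal ring over a field F (2 ≤ t ≤ n), p the height-one prime generated by the (t-1)-minors of the first t-1 rows of the Hankel matrix, and v the valuation of the discrete valuation ring R_p. Then for 1 ≤ i_1 < i_2 < ... < i_{t-1} ≤ n, v([1 ... t-1 | i_1 ... i_{t-1}]) = n+1-i_{t-1}, where [1 ... t-1 | i_1 ... i_{t-1}] denotes the minor of H with rows 1,...,t-1 and columns i_1,...,i_{t-1}. -/

import Mathlib

set_option synthInstance.maxHeartbeats 1000000
set_option maxHeartbeats 1000000

open MvPolynomial Matrix

/-!
Write `h c` for the minor on the first `t - 1` rows of the infinite Hankel matrix and the columns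
`c`, counted from `0`, and `c + 1` for the columns shifted by one. Modulo the `t`-minors, the signed
`(t - 1)`-minors of the columns `d` annihilate every column of length `t`; comparing them with the
signed minors of the columns `c` gives `h c * h (d + 1) = h (c + 1) * h d`. If `c` ends at column
`n - 1 - q`, then `h (c + q + 1)` involves the corner variable `x (n + t - 2)` and is a unit of
`R_p`, so `h (c + q)` generates the maximal ideal and `h c` is a unit times its `(q + 1)`-st power.

It remains to see that the maximal ideal is not nilpotent. The residues of the variables at `p`
satisfy a linear recurrence of order `t - 2` up to a defect `y` in the last one, of index
`N = n + t - 2`. Viewing this defect as the geometric sequence `y * 0 ^ (N - m)` and deforming it to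
`y * T ^ (N - m)` gives a sequence over `κ(p)[T]` with a recurrence of order `t - 1`, hence a
homomorphism from `R`, and `h (c + q)` is nonzero along this deformation.
-/

section SignedMinors

variable {R : Type*} [CommRing R] {k : ℕ}

/-- The signed maximal minors of a `(k + 1) × k` matrix: the cofactors along a column appended on
the right. -/
def signedMinors (M : Matrix (Fin (k + 1)) (Fin k) R) (i : Fin (k + 1)) : R :=
  (-1) ^ ((i : ℕ) + k) * (M.submatrix i.succAbove id).det

lemma signedMinors_dotProduct (M : Matrix (Fin (k + 1)) (Fin k) R) (v : Fin (k + 1) → R) :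
    signedMinors M ⬝ᵥ v = (of fun i => (Fin.snoc (M i) (v i) : Fin (k + 1) → R)).det := by
  rw [det_succ_column _ (Fin.last k), dotProduct]
  refine Finset.sum_congr rfl fun i _ => ?_
  have hminor : (of fun i => (Fin.snoc (M i) (v i) : Fin (k + 1) → R)).submatrix i.succAbove
      (Fin.last k).succAbove = M.submatrix i.succAbove id := by
    ext a b
    simp
  simp only [hminor, signedMinors, of_apply, Fin.snoc_last, Fin.val_last]
  ring

lemma mul_signedMinors_comm {M : Matrix (Fin (k + 1)) (Fin k) R} {w : Fin (k + 1) → R}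
    (hw : w ᵥ* M = 0) (i j : Fin (k + 1)) :
    w i * signedMinors M j = w j * signedMinors M i := by
  set B : Matrix (Fin (k + 1)) (Fin (k + 1)) R :=
    of fun a => Fin.snoc (M a) ((Pi.single i 1 : Fin (k + 1) → R) a) with hB
  have hdet : B.det = signedMinors M i := by
    rw [hB, ← signedMinors_dotProduct, dotProduct_single_one]
  have hadj : B.adjugate (Fin.last k) j = signedMinors M j := by
    rw [adjugate_fin_succ_eq_det_submatrix, signedMinors, Fin.val_last]
    congr 2
    ext a b
    simp [hB]
  have hwB : w ᵥ* B = Pi.single (Fin.last k) (w i) := by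
    ext l
    refine Fin.lastCases ?_ (fun l => ?_) l
    · simp [hB, vecMul, dotProduct, Pi.single_apply]
    · simpa [hB, vecMul, dotProduct] using congrFun hw l
  calc w i * signedMinors M j = (w ᵥ* B ᵥ* B.adjugate) j := by
        rw [hwB, single_vecMul, ← hadj]; rfl
    _ = w j * signedMinors M i := by
        rw [vecMul_vecMul, mul_adjugate, hdet, vecMul_smul, vecMul_one, Pi.smul_apply, smul_eq_mul,
          mul_comm]

end SignedMinors

section Hankel

variable {A B : Type*} [CommRing A] [CommRing B] {k n : ℕ}

/-- The first `k` rows of the infinite Hankel matrix `(x (i + j))`, restricted to the columns `c`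
(all indices start at `0`). -/
def hankelRows (x : ℕ → A) (k : ℕ) {ι : Type*} (c : ι → ℕ) : Matrix (Fin k) ι A :=
  of fun i j => x (i + c j)

omit [CommRing A] in
@[simp]
lemma hankelRows_apply (x : ℕ → A) {ι : Type*} (c : ι → ℕ) (i : Fin k) (j : ι) :
    hankelRows x k c i j = x (i + c j) := rfl

/-- The minor of the Hankel matrix of `x` on its first `k` rows and the columns `c`. -/
def hankelMinor (x : ℕ → A) (c : Fin k → ℕ) : A :=
  (hankelRows x k c).det

/-- The ideal of the minors on the first `k` rows and any `k` of the first `n` columns of the Hankel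
matrix of `x`. -/
def hankelIdeal (x : ℕ → A) (n k : ℕ) : Ideal A :=
  Ideal.span (Set.range fun g : Fin k → Fin n => hankelMinor x fun j => g j)

lemma map_hankelMinor (f : A →+* B) (x : ℕ → A) (c : Fin k → ℕ) :
    f (hankelMinor x c) = hankelMinor (fun m => f (x m)) c :=
  f.map_det _

lemma hankelMinor_congr {x y : ℕ → A} {c : Fin k → ℕ}
    (h : ∀ i j : Fin k, x (i + c j) = y (i + c j)) : hankelMinor x c = hankelMinor y c :=
  congrArg det (Matrix.ext h)

lemma hankelMinor_const_mul (a : A) (x : ℕ → A) (c : Fin k → ℕ) :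
    hankelMinor (fun m => a * x m) c = a ^ k * hankelMinor x c := by
  have h := det_smul (hankelRows x k c) a
  rwa [Fintype.card_fin] at h

lemma hankelMinor_mem_hankelIdeal (x : ℕ → A) {c : Fin k → ℕ} (hc : ∀ j, c j < n) :
    hankelMinor x c ∈ hankelIdeal x n k :=
  Ideal.subset_span ⟨fun j => ⟨c j, hc j⟩, rfl⟩

lemma hankelIdeal_le_iff {x : ℕ → A} {J : Ideal A} :
    hankelIdeal x n k ≤ J ↔ ∀ c : Fin k → ℕ, (∀ j, c j < n) → hankelMinor x c ∈ J := by
  refine ⟨fun h c hc => h (hankelMinor_mem_hankelIdeal x hc), fun h => Ideal.span_le.2 ?_⟩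
  rintro _ ⟨g, rfl⟩
  exact h _ fun j => (g j).2

lemma hankelMinor_eq_zero {x : ℕ → A} (hx : hankelIdeal x n k = ⊥) {c : Fin k → ℕ}
    (hc : ∀ j, c j < n) : hankelMinor x c = 0 :=
  Ideal.mem_bot.1 (hx ▸ hankelMinor_mem_hankelIdeal x hc)

lemma map_hankelIdeal (f : A →+* B) (x : ℕ → A) (n k : ℕ) :
    (hankelIdeal x n k).map f = hankelIdeal (fun m => f (x m)) n k := by
  rw [hankelIdeal, Ideal.map_span, ← Set.range_comp]
  exact congrArg (Ideal.span <| Set.range ·) (funext fun g => map_hankelMinor f x _)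

lemma hankelIdeal_congr {x y : ℕ → A} (h : ∀ m, m + 1 < n + k → x m = y m) :
    hankelIdeal x n k = hankelIdeal y n k := by
  refine congrArg (Ideal.span <| Set.range ·) (funext fun g => hankelMinor_congr fun i j => h _ ?_)
  omega

lemma hankelIdeal_succ_le (x : ℕ → A) (n k : ℕ) :
    hankelIdeal x n (k + 1) ≤ hankelIdeal x n k := by
  refine hankelIdeal_le_iff.2 fun c hc => ?_
  rw [hankelMinor, det_succ_row _ (Fin.last k)]
  refine sum_mem fun j _ => Ideal.mul_mem_left _ _ ?_
  rw [Fin.succAbove_last]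
  exact hankelMinor_mem_hankelIdeal x fun i => hc (j.succAbove i)

lemma hankelMinor_eq_add_of_eq_below_corner {x y : ℕ → A} {c : Fin (k + 1) → ℕ}
    (hc : StrictMono c) (h : ∀ m < k + c (Fin.last k), x m = y m) :
    hankelMinor y c = hankelMinor x c +
      (y (k + c (Fin.last k)) - x (k + c (Fin.last k))) *
        hankelMinor x fun j : Fin k => c j.castSucc := by
  have hminors : ∀ j, (hankelRows y (k + 1) c).submatrix (Fin.last k).succAbove (Fin.succAbove j) =
      (hankelRows x (k + 1) c).submatrix (Fin.last k).succAbove (Fin.succAbove j) := by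
    intro j
    ext a b
    have := hc.monotone (Fin.le_last (j.succAbove b))
    simp only [submatrix_apply, Fin.succAbove_last, hankelRows_apply, Fin.val_castSucc]
    exact (h _ (by omega)).symm
  have hcorner : (hankelRows x (k + 1) c).submatrix (Fin.last k).succAbove
      (Fin.last k).succAbove = hankelRows x k fun j : Fin k => c j.castSucc := by
    ext a b
    simp
  have hrow : ∀ j : Fin k, x (k + c j.castSucc) = y (k + c j.castSucc) := fun j =>
    h _ (Nat.add_lt_add_left (hc j.castSucc_lt_last) k)
  rw [hankelMinor, hankelMinor, hankelMinor, det_succ_row _ (Fin.last k),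
    det_succ_row (hankelRows x (k + 1) c) (Fin.last k), Fin.sum_univ_castSucc,
    Fin.sum_univ_castSucc]
  simp only [hminors, hcorner, hankelRows_apply, Fin.val_last, hrow, Even.neg_one_pow ⟨k, rfl⟩]
  ring

lemma signedMinors_hankelRows_last (x : ℕ → A) (c : Fin k → ℕ) :
    signedMinors (hankelRows x (k + 1) c) (Fin.last k) = hankelMinor x c := by
  rw [signedMinors, Fin.val_last, Even.neg_one_pow ⟨k, rfl⟩, one_mul, Fin.succAbove_last]
  rfl

lemma signedMinors_hankelRows_zero (x : ℕ → A) (c : Fin k → ℕ) :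
    signedMinors (hankelRows x (k + 1) c) 0 = (-1) ^ k * hankelMinor x fun j => c j + 1 := by
  rw [signedMinors, Fin.val_zero, zero_add, hankelMinor]
  congr 2
  ext i j
  simp [add_assoc, add_comm 1]

lemma mul_hankelMinor_eq_of_dotProduct_eq_zero {x : ℕ → A} {w : Fin (k + 1) → A} {c : Fin k → ℕ}
    (hw : ∀ j, w ⬝ᵥ (fun i => x (i + c j)) = 0) :
    w 0 * hankelMinor x c = w (Fin.last k) * ((-1) ^ k * hankelMinor x fun j => c j + 1) := by
  have h := mul_signedMinors_comm (M := hankelRows x (k + 1) c) (funext hw) 0 (Fin.last k)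
  rwa [signedMinors_hankelRows_last, signedMinors_hankelRows_zero] at h

lemma signedMinors_hankelRows_dotProduct (x : ℕ → A) (c : Fin k → ℕ) (m : ℕ) :
    signedMinors (hankelRows x (k + 1) c) ⬝ᵥ (fun i => x (i + m)) =
      hankelMinor x (Fin.snoc c m : Fin (k + 1) → ℕ) := by
  rw [signedMinors_dotProduct, hankelMinor]
  congr 1
  ext i j
  refine Fin.lastCases ?_ (fun j => ?_) j <;> simp

lemma signedMinors_hankelRows_dotProduct_eq_zero {x : ℕ → A} (hx : hankelIdeal x n (k + 1) = ⊥)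
    {c : Fin k → ℕ} (hc : ∀ j, c j < n) {m : ℕ} (hm : m < n) :
    signedMinors (hankelRows x (k + 1) c) ⬝ᵥ (fun i => x (i + m)) = 0 := by
  rw [signedMinors_hankelRows_dotProduct]
  exact hankelMinor_eq_zero hx fun j => by refine Fin.lastCases ?_ (fun j => ?_) j <;> simp [hm, hc]

lemma hankelMinor_mul_shift_comm {x : ℕ → A} (hx : hankelIdeal x n (k + 1) = ⊥) {c d : Fin k → ℕ}
    (hc : ∀ j, c j < n) (hd : ∀ j, d j < n) :
    hankelMinor x c * hankelMinor x (fun j => d j + 1) =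
      hankelMinor x (fun j => c j + 1) * hankelMinor x d := by
  have h := mul_hankelMinor_eq_of_dotProduct_eq_zero fun j =>
    signedMinors_hankelRows_dotProduct_eq_zero hx hd (hc j)
  rw [signedMinors_hankelRows_last, signedMinors_hankelRows_zero] at h
  have hsign : ((-1 : A) ^ k) * (-1) ^ k = 1 := by rw [← pow_add, Even.neg_one_pow ⟨k, rfl⟩]
  linear_combination (-1) ^ k * h + (hankelMinor x (fun j => c j + 1) * hankelMinor x d -
    hankelMinor x c * hankelMinor x (fun j => d j + 1)) * hsign

lemma hankelMinor_mul_pow_shift {x : ℕ → A} (hx : hankelIdeal x n (k + 1) = ⊥) {c d : Fin k → ℕ}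
    (hd : ∀ j, d j < n) {q : ℕ} (hc : ∀ j, c j + q ≤ n) :
    hankelMinor x c * hankelMinor x (fun j => d j + 1) ^ q =
      hankelMinor x (fun j => c j + q) * hankelMinor x d ^ q := by
  induction q with
  | zero => simp
  | succ q ih =>
    have hstep := hankelMinor_mul_shift_comm hx (c := fun j => c j + q) (fun j => hc j) hd
    have hq := ih fun j => (Nat.le_succ _).trans (hc j)
    calc hankelMinor x c * hankelMinor x (fun j => d j + 1) ^ (q + 1)
        = hankelMinor x (fun j => c j + q) * hankelMinor x (fun j => d j + 1) *
            hankelMinor x d ^ q := by rw [pow_succ, ← mul_assoc, hq]; ring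
      _ = hankelMinor x (fun j => c j + (q + 1)) * hankelMinor x d ^ (q + 1) := by
        rw [hstep, pow_succ']; simp only [add_assoc]; ring

lemma hankelIdeal_eq_span_singleton {x : ℕ → A} (hx : hankelIdeal x n (k + 1) = ⊥) {d : Fin k → ℕ}
    (hd : ∀ j, d j < n) (hunit : IsUnit (hankelMinor x fun j => d j + 1)) :
    hankelIdeal x n k = Ideal.span {hankelMinor x d} := by
  refine le_antisymm (hankelIdeal_le_iff.2 fun c hc => ?_)
    ((Ideal.span_singleton_le_iff_mem _).2 (hankelMinor_mem_hankelIdeal x hd))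
  rw [← Ideal.mul_unit_mem_iff_mem _ hunit, hankelMinor_mul_shift_comm hx hc hd]
  exact Ideal.mul_mem_left _ _ (Ideal.mem_span_singleton_self _)

lemma span_hankelMinor_eq_pow {x : ℕ → A} (hx : hankelIdeal x n (k + 1) = ⊥) {c : Fin k → ℕ} {q : ℕ}
    (hc : ∀ j, c j + q < n) (hunit : IsUnit (hankelMinor x fun j => c j + q + 1)) :
    Ideal.span {hankelMinor x c} = hankelIdeal x n k ^ (q + 1) := by
  rw [hankelIdeal_eq_span_singleton hx hc hunit, Ideal.span_singleton_pow,
    ← Ideal.span_singleton_mul_right_unit (hunit.pow (q + 1)),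
    hankelMinor_mul_pow_shift hx hc hc]
  exact Ideal.span_singleton_mul_left_unit hunit _

end Hankel

section Deformation

variable {A : Type*} [CommRing A] {x : ℕ → A} {n k : ℕ}

lemma hankelIdeal_eq_bot_of_dotProduct_eq_zero [IsDomain A] {w : Fin k → A} (hw : w ≠ 0)
    (h : ∀ m < n, w ⬝ᵥ (fun i => x (i + m)) = 0) : hankelIdeal x n k = ⊥ :=
  le_bot_iff.1 <| hankelIdeal_le_iff.2 fun c hc =>
    exists_vecMul_eq_zero_iff.1 ⟨w, hw, funext fun j => h (c j) (hc j)⟩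

/-- The deformation of the sequence `x` which replaces a summand `y * 0 ^ (N - m)`, that is `y` in
degree `N`, by the geometric sequence `y * T ^ (N - m)`; it specializes to `x` at `T = 0`. Only the
terms `m ≤ N` are meaningful. -/
def deformation (x : ℕ → A) (N : ℕ) (y T : A) (m : ℕ) : A :=
  x m + y * (T ^ (N - m) - 0 ^ (N - m))

variable {v : Fin (k + 1) → A} {y : A} (T : A)

lemma dotProduct_deformation (hv : ∀ m < n, v ⬝ᵥ (fun i => x (i + m)) = 0)
    (hy : v ⬝ᵥ (fun i => x (i + n)) = v (Fin.last k) * y) {m : ℕ} (hm : m ≤ n) :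
    v ⬝ᵥ (fun i => deformation x (n + k) y T (i + m)) =
      T ^ (n - m) * (y * ∑ i : Fin (k + 1), v i * T ^ (k - i)) := by
  have hrec : ∑ i, v i * x (i + m) = v (Fin.last k) * y * 0 ^ (n - m) := by
    rcases hm.eq_or_lt with rfl | hm
    · simpa [dotProduct] using hy
    · simpa [dotProduct, (Nat.sub_pos_of_lt hm).ne'] using hv m hm
  have hcorrection : ∑ i : Fin (k + 1), v i * 0 ^ (n + k - (i + m)) =
      v (Fin.last k) * 0 ^ (n - m) := by
    rw [Fin.sum_univ_castSucc, Finset.sum_eq_zero fun i _ => ?_, zero_add, Fin.val_last]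
    · congr 2
      omega
    · rw [Fin.val_castSucc, zero_pow (by omega), mul_zero]
  have hpow : ∀ i : Fin (k + 1), T ^ (n + k - (i + m)) = T ^ (n - m) * T ^ (k - i) := fun i => by
    rw [← pow_add]
    congr 1
    omega
  calc v ⬝ᵥ (fun i => deformation x (n + k) y T (i + m))
      = ∑ i, v i * x (i + m) - y * ∑ i : Fin (k + 1), v i * 0 ^ (n + k - (i + m)) +
          y * ∑ i : Fin (k + 1), v i * T ^ (n + k - (i + m)) := by
        simp only [dotProduct, deformation, Finset.mul_sum, ← Finset.sum_sub_distrib,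
          ← Finset.sum_add_distrib]
        exact Finset.sum_congr rfl fun i _ => by ring
    _ = T ^ (n - m) * (y * ∑ i : Fin (k + 1), v i * T ^ (k - i)) := by
        simp only [hrec, hcorrection, hpow, ← Finset.mul_sum, mul_left_comm _ (T ^ (n - m))]
        ring

/-- The coefficients, in increasing degree, of the product of `∑ i, v i * Z ^ i` and `1 - T * Z`:
the recurrence of the sum of a sequence with recurrence `v` and a geometric one of ratio `T⁻¹`. -/
def mulOneSub (v : Fin (k + 1) → A) (T : A) : Fin (k + 2) → A :=
  Fin.snoc (α := fun _ => A) v 0 - T • Fin.cons (α := fun _ => A) 0 v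

lemma mulOneSub_dotProduct (v : Fin (k + 1) → A) (z : ℕ → A) (m : ℕ) :
    mulOneSub v T ⬝ᵥ (fun i => z (i + m)) =
      v ⬝ᵥ (fun i => z (i + m)) - T * v ⬝ᵥ (fun i => z (i + (m + 1))) := by
  have hsnoc : (Fin.snoc (α := fun _ => A) v 0 : Fin (k + 2) → A) ⬝ᵥ (fun i => z (i + m)) =
      v ⬝ᵥ (fun i => z (i + m)) := by
    simp [dotProduct, Fin.sum_univ_castSucc (n := k + 1)]
  have hcons : (Fin.cons (α := fun _ => A) 0 v : Fin (k + 2) → A) ⬝ᵥ (fun i => z (i + m)) =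
      v ⬝ᵥ (fun i => z (i + (m + 1))) := by
    simp [dotProduct, Fin.sum_univ_succ (n := k + 1), add_assoc, add_comm 1]
  rw [mulOneSub, sub_dotProduct, smul_dotProduct, hsnoc, hcons, smul_eq_mul]

lemma mulOneSub_last (v : Fin (k + 1) → A) :
    mulOneSub v T (Fin.last (k + 1)) = -(T * v (Fin.last k)) := by
  have hcons : (Fin.cons (α := fun _ => A) 0 v : Fin (k + 2) → A) (Fin.last (k + 1)) =
      v (Fin.last k) := by
    rw [← Fin.succ_last, Fin.cons_succ]
  rw [mulOneSub, Pi.sub_apply, Pi.smul_apply, Fin.snoc_last, hcons, zero_sub, smul_eq_mul]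

lemma mulOneSub_dotProduct_deformation (hv : ∀ m < n, v ⬝ᵥ (fun i => x (i + m)) = 0)
    (hy : v ⬝ᵥ (fun i => x (i + n)) = v (Fin.last k) * y) {m : ℕ} (hm : m < n) :
    mulOneSub v T ⬝ᵥ (fun i => deformation x (n + k) y T (i + m)) = 0 := by
  rw [mulOneSub_dotProduct, dotProduct_deformation T hv hy hm.le, dotProduct_deformation T hv hy hm,
    ← mul_assoc T, ← pow_succ', show n - (m + 1) + 1 = n - m by omega, sub_self]

theorem exists_polynomial_deformation {K : Type*} [Field K] {s : ℕ → K} {c : Fin k → ℕ}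
    (hs : hankelIdeal s n (k + 1) = ⊥) (hc : ∀ j, c j < n) (hsc : hankelMinor s c ≠ 0) :
    ∃ z : ℕ → Polynomial K, (∀ m, Polynomial.constantCoeff (z m) = s m) ∧
      hankelIdeal z n (k + 2) = ⊥ ∧
      ∀ d : Fin (k + 1) → ℕ, (∀ j, d j < n) → hankelMinor s (fun j => d j + 1) ≠ 0 →
        hankelMinor z d ≠ 0 := by
  set v := signedMinors (hankelRows s (k + 1) c) with hv
  set y := v ⬝ᵥ (fun i => s (i + n)) / v (Fin.last k)
  have hv_last : v (Fin.last k) ≠ 0 := by rwa [hv, signedMinors_hankelRows_last]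
  have hC : ∀ m, (fun i => Polynomial.C (v i)) ⬝ᵥ (fun i => Polynomial.C (s (i + m))) =
      Polynomial.C (v ⬝ᵥ fun i => s (i + m)) := fun m => (RingHom.map_dotProduct _ _ _).symm
  set z := deformation (fun m => Polynomial.C (s m)) (n + k) (Polynomial.C y) Polynomial.X with hz
  set w := mulOneSub (fun i => Polynomial.C (v i)) (Polynomial.X : Polynomial K) with hw
  have hwz : ∀ m < n, w ⬝ᵥ (fun i => z (i + m)) = 0 := fun m hm => by
    refine mulOneSub_dotProduct_deformation _ (fun m hm => ?_) ?_ hm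
    · rw [hC, signedMinors_hankelRows_dotProduct_eq_zero hs hc hm, map_zero]
    · rw [hC, ← map_mul, mul_div_cancel₀ _ hv_last]
  have hw_last : w (Fin.last (k + 1)) ≠ 0 := by
    rw [hw, mulOneSub_last]
    exact neg_ne_zero.2 (mul_ne_zero Polynomial.X_ne_zero (Polynomial.C_ne_zero.2 hv_last))
  have hX : Polynomial.constantCoeff (Polynomial.X : Polynomial K) = 0 := Polynomial.coeff_X_zero
  have hz0 : ∀ m, Polynomial.constantCoeff (z m) = s m := fun m => by
    rw [hz, deformation, map_add, map_mul, map_sub, map_pow, map_pow, hX, map_zero, sub_self,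
      mul_zero, add_zero, Polynomial.constantCoeff_apply, Polynomial.coeff_C_zero]
  refine ⟨z, hz0, hankelIdeal_eq_bot_of_dotProduct_eq_zero
    (fun h => hw_last (congrFun h _)) hwz, fun d hd hsd hzd => ?_⟩
  have hrel := mul_hankelMinor_eq_of_dotProduct_eq_zero fun j => hwz (d j) (hd j)
  have hzd' : hankelMinor z (fun j => d j + 1) = 0 := by simpa [hzd, hw_last] using hrel
  have h0 := map_hankelMinor Polynomial.constantCoeff z fun j => d j + 1
  rw [hzd', map_zero, funext hz0] at h0
  exact hsd h0.symm

end Deformation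

section Generic

lemma hankelMinor_pow_sq_ne_zero {A : Type*} [CommRing A] [IsDomain A] {a : A}
    (ha : Function.Injective fun m : ℕ => a ^ m) {k : ℕ} {c : Fin k → ℕ}
    (hc : Function.Injective c) : hankelMinor (fun m => a ^ m ^ 2) c ≠ 0 := by
  have ha0 : a ≠ 0 := fun h => absurd (@ha 1 2 (by simp [h])) (by decide)
  have hprod : ∀ f : Fin k → ℕ, ∏ i, a ^ f i ≠ 0 := fun f =>
    Finset.prod_ne_zero_iff.2 fun i _ => pow_ne_zero _ ha0
  have hvandermonde : (vandermonde fun j => a ^ (2 * c j))ᵀ.det ≠ 0 := by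
    rw [det_transpose, det_vandermonde_ne_zero_iff]
    exact fun i j hij => hc (Nat.eq_of_mul_eq_mul_left two_pos (ha hij))
  have hfactor : hankelMinor (fun m => a ^ m ^ 2) c =
      (∏ j, a ^ c j ^ 2) * ((∏ i : Fin k, a ^ (i : ℕ) ^ 2) *
        (vandermonde fun j => a ^ (2 * c j))ᵀ.det) := by
    rw [← det_mul_column, ← det_mul_row, hankelMinor]
    congr 1
    ext i j
    simp only [hankelRows_apply, of_apply, transpose_apply, vandermonde_apply, ← pow_mul, ← pow_add]
    ring_nf
  rw [hfactor]
  exact mul_ne_zero (hprod _) (mul_ne_zero (hprod _) hvandermonde)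

/-- The test sequence `T * Y ^ (m ^ 2)` in `R[Y][T]`, with the term of index `N` replaced by `1`.
The order in `T` of its minors separates those involving the term of index `N` from the others. -/
noncomputable def testSeq (R : Type*) [CommRing R] (N m : ℕ) : Polynomial (Polynomial R) :=
  if m = N then 1 else Polynomial.X * Polynomial.C (Polynomial.X ^ m ^ 2)

variable (R : Type*) [CommRing R] {k n : ℕ}

lemma hankelMinor_testSeq_of_le {N : ℕ} {c : Fin k → ℕ} (hc : ∀ j, k + c j ≤ N) :
    hankelMinor (testSeq R N) c = Polynomial.X ^ k *
      Polynomial.C (hankelMinor (fun m => (Polynomial.X : Polynomial R) ^ m ^ 2) c) := by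
  rw [map_hankelMinor, ← hankelMinor_const_mul]
  refine hankelMinor_congr fun i j => if_neg ?_
  have := hc j
  omega

lemma hankelIdeal_testSeq_le :
    hankelIdeal (testSeq R (n + k)) n (k + 1) ≤ Ideal.span {Polynomial.X ^ (k + 1)} := by
  refine hankelIdeal_le_iff.2 fun c hc => ?_
  rw [hankelMinor_testSeq_of_le R fun j => by have := hc j; omega, Ideal.mem_span_singleton]
  exact dvd_mul_right _ _

variable [IsDomain R]

lemma hankelMinor_X_pow_sq_ne_zero {c : Fin k → ℕ} (hc : Function.Injective c) :
    hankelMinor (fun m => (Polynomial.X : Polynomial R) ^ m ^ 2) c ≠ 0 :=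
  hankelMinor_pow_sq_ne_zero
    (fun a b hab => by simpa using congrArg Polynomial.natDegree hab) hc

lemma hankelMinor_testSeq_notMem {c : Fin k → ℕ} (hc : Function.Injective c) (hcn : ∀ j, c j < n) :
    hankelMinor (testSeq R (n + k)) c ∉ hankelIdeal (testSeq R (n + k)) n (k + 1) := by
  intro h
  have hdvd := Ideal.mem_span_singleton.1 (hankelIdeal_testSeq_le R h)
  rw [hankelMinor_testSeq_of_le R fun j => by have := hcn j; omega, pow_succ,
    mul_dvd_mul_iff_left (pow_ne_zero _ Polynomial.X_ne_zero), Polynomial.X_dvd_iff,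
    Polynomial.coeff_C_zero] at hdvd
  exact hankelMinor_X_pow_sq_ne_zero R hc hdvd

lemma hankelMinor_testSeq_corner_notMem {c : Fin (k + 1) → ℕ} (hc : StrictMono c)
    (hcn : c (Fin.last k) = n) :
    hankelMinor (testSeq R (n + k)) c ∉ hankelIdeal (testSeq R (n + k)) n (k + 1) := by
  intro h
  have hdvd := Ideal.mem_span_singleton.1 (hankelIdeal_testSeq_le R h)
  have hcorner := hankelMinor_eq_add_of_eq_below_corner
    (x := fun m => Polynomial.X * Polynomial.C ((Polynomial.X : Polynomial R) ^ m ^ 2))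
    (y := testSeq R (n + k)) hc fun m hm => (if_neg (by omega)).symm
  have htop : testSeq R (n + k) (k + c (Fin.last k)) = 1 := if_pos (by omega)
  rw [hcorner, htop, hankelMinor_const_mul, hankelMinor_const_mul,
    dvd_add_right (dvd_mul_right _ _), mul_left_comm, pow_succ,
    mul_dvd_mul_iff_left (pow_ne_zero _ Polynomial.X_ne_zero), ← map_hankelMinor,
    Polynomial.X_dvd_iff] at hdvd
  exact hankelMinor_X_pow_sq_ne_zero R (c := fun j : Fin k => c j.castSucc)
    (hc.injective.comp (Fin.castSucc_injective k)) (by simpa using hdvd)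

end Generic

section Localization

variable {R L : Type*} [CommRing R] [CommRing L]

lemma notMem_maximalIdeal_pow_succ [IsLocalRing L] {a : L} {q : ℕ}
    (ha : Ideal.span {a} = IsLocalRing.maximalIdeal L ^ q)
    (hnil : ¬IsNilpotent (IsLocalRing.maximalIdeal L)) :
    a ∉ IsLocalRing.maximalIdeal L ^ (q + 1) := by
  refine fun h => hnil ⟨q, ?_⟩
  have hfg : (IsLocalRing.maximalIdeal L ^ q).FG := ha ▸ Submodule.fg_span_singleton a
  refine Submodule.eq_bot_of_le_smul_of_le_jacobson_bot _ _ hfg ?_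
    (IsLocalRing.maximalIdeal_le_jacobson _)
  rw [smul_eq_mul, ← pow_succ', ← ha]
  exact (Ideal.span_singleton_le_iff_mem _).2 h

lemma not_isNilpotent_maximalIdeal {D : Type*} [CommRing D] [IsDomain D] [Algebra R L]
    (p : Ideal R) [p.IsPrime] [IsLocalization.AtPrime L p] [IsLocalRing L] (φ : R →+* D)
    (hφ : RingHom.ker φ ≤ p) {a : R} (ha : a ∈ p) (hφa : φ a ≠ 0) :
    ¬IsNilpotent (IsLocalRing.maximalIdeal L) := by
  rintro ⟨q, hq⟩
  have haq : algebraMap R L (a ^ q) = 0 := by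
    rw [map_pow, ← Ideal.mem_bot, ← Ideal.zero_eq_bot, ← hq,
      ← IsLocalization.AtPrime.map_eq_maximalIdeal p L]
    exact Ideal.pow_mem_pow (Ideal.mem_map_of_mem _ ha) q
  obtain ⟨u, hu⟩ := (IsLocalization.map_eq_zero_iff p.primeCompl L _).1 haq
  have hφu : φ u ≠ 0 := fun h => u.2 (hφ h)
  exact mul_ne_zero hφu (pow_ne_zero q hφa) (by rw [← map_pow, ← map_mul, hu, map_zero])

end Localization

section Valuation

/-- The variable `X m` of the polynomial ring in `N` variables, indexed by `ℕ` so that it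
can be the argument of `hankelMinor`; it is `0` for `m ≥ N`. -/
noncomputable def finVar (F : Type*) [CommRing F] (N m : ℕ) : MvPolynomial (Fin N) F :=
  if h : m < N then X ⟨m, h⟩ else 0

lemma eval₂Hom_finVar {F A : Type*} [CommRing F] [CommRing A] (f : F →+* A) (z : ℕ → A) {N m : ℕ}
    (hm : m < N) : eval₂Hom f (fun i : Fin N => z i) (finVar F N m) = z m := by
  rw [finVar, dif_pos hm, eval₂Hom_X']

variable {F : Type*} [CommRing F] {N n r : ℕ}

lemma map_hankelIdeal_finVar {A : Type*} [CommRing A] (f : F →+* A) (z : ℕ → A) {k : ℕ}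
    (hN : n + k ≤ N + 1) :
    (hankelIdeal (finVar F N) n k).map (eval₂Hom f fun i : Fin N => z i) = hankelIdeal z n k := by
  rw [map_hankelIdeal]
  exact hankelIdeal_congr fun m hm => eval₂Hom_finVar f z (by omega)

lemma map_hankelMinor_finVar {A : Type*} [CommRing A] (f : F →+* A) (z : ℕ → A) {k : ℕ}
    {c : Fin k → ℕ} (hc : ∀ j, k + c j ≤ N) :
    eval₂Hom f (fun i : Fin N => z i) (hankelMinor (finVar F N) c) = hankelMinor z c := by
  rw [map_hankelMinor]
  exact hankelMinor_congr fun i j => eval₂Hom_finVar f z (by have := hc j; omega)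

lemma hankelMinor_finVar_notMem [IsDomain F] (hN : n + r < N) {c : Fin r → ℕ}
    (hc : Function.Injective c) (hcn : ∀ j, c j < n) :
    hankelMinor (finVar F N) c ∉ hankelIdeal (finVar F N) n (r + 1) := fun h => by
  have hmem := Ideal.mem_map_of_mem (eval₂Hom (Polynomial.C.comp Polynomial.C)
    fun i : Fin N => testSeq F (n + r) i) h
  rw [map_hankelIdeal_finVar _ _ (by omega),
    map_hankelMinor_finVar _ _ fun j => by have := hcn j; omega] at hmem
  exact hankelMinor_testSeq_notMem F hc hcn hmem

lemma hankelMinor_finVar_corner_notMem [IsDomain F] (hN : n + r < N) {c : Fin (r + 1) → ℕ}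
    (hc : StrictMono c) (hcn : c (Fin.last r) = n) :
    hankelMinor (finVar F N) c ∉ hankelIdeal (finVar F N) n (r + 1) := fun h => by
  have hmem := Ideal.mem_map_of_mem (eval₂Hom (Polynomial.C.comp Polynomial.C)
    fun i : Fin N => testSeq F (n + r) i) h
  rw [map_hankelIdeal_finVar _ _ (by omega), map_hankelMinor_finVar _ _ fun j => by
    have := hc.monotone (Fin.le_last j)
    omega] at hmem
  exact hankelMinor_testSeq_corner_notMem F hc hcn hmem

variable {I : Ideal (MvPolynomial (Fin N) F)} {p : Ideal (MvPolynomial (Fin N) F ⧸ I)}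

lemma mk_mem_iff_mem_hankelIdeal (hI : I = hankelIdeal (finVar F N) n (r + 2))
    (hp : p = (hankelIdeal (finVar F N) n (r + 1)).map (Ideal.Quotient.mk I))
    {f : MvPolynomial (Fin N) F} :
    Ideal.Quotient.mk I f ∈ p ↔ f ∈ hankelIdeal (finVar F N) n (r + 1) := by
  rw [hp, Ideal.mem_quotient_iff_mem (hI ▸ hankelIdeal_succ_le _ n (r + 1))]

lemma exists_residue_deformation [IsDomain F] [p.IsPrime] (hN : n + r < N)
    (hI : I = hankelIdeal (finVar F N) n (r + 2))
    (hp : p = (hankelIdeal (finVar F N) n (r + 1)).map (Ideal.Quotient.mk I))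
    {d : Fin (r + 1) → ℕ} (hd : StrictMono d) (hdn : d (Fin.last r) + 1 = n) :
    ∃ z : ℕ → Polynomial p.ResidueField, (∀ m, Polynomial.constantCoeff (z m) =
        algebraMap _ p.ResidueField (Ideal.Quotient.mk I (finVar F N m))) ∧
      hankelIdeal z n (r + 2) = ⊥ ∧ hankelMinor z d ≠ 0 := by
  set π := (algebraMap (MvPolynomial (Fin N) F ⧸ I) p.ResidueField).comp (Ideal.Quotient.mk I)
  have hπ : ∀ {f}, π f = 0 ↔ f ∈ hankelIdeal (finVar F N) n (r + 1) :=
    Ideal.algebraMap_residueField_eq_zero.trans (mk_mem_iff_mem_hankelIdeal hI hp)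
  have hdlt : ∀ j, d j < n := fun j => by
    have := hd.monotone (Fin.le_last j)
    omega
  have hbot : hankelIdeal (fun m => π (finVar F N m)) n (r + 1) = ⊥ := by
    rw [← map_hankelIdeal, Ideal.map_eq_bot_iff_le_ker]
    exact fun f hf => hπ.2 hf
  have hsmall : hankelMinor (fun m => π (finVar F N m)) (fun j : Fin r => d j.castSucc) ≠ 0 := by
    rw [← map_hankelMinor, Ne, hπ]
    exact hankelMinor_finVar_notMem hN (hd.injective.comp (Fin.castSucc_injective r))
      fun j => hdlt _
  have hcorner : hankelMinor (fun m => π (finVar F N m)) (fun j => d j + 1) ≠ 0 := by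
    rw [← map_hankelMinor, Ne, hπ]
    exact hankelMinor_finVar_corner_notMem hN (fun i j hij => Nat.succ_lt_succ (hd hij)) hdn
  obtain ⟨z, hz, hz0, hzd⟩ := exists_polynomial_deformation hbot (fun j => hdlt _) hsmall
  exact ⟨z, hz, hz0, hzd d hdlt hcorner⟩

lemma exists_hom_ker_le [IsDomain F] [p.IsPrime] (hN : n + r < N)
    (hI : I = hankelIdeal (finVar F N) n (r + 2))
    (hp : p = (hankelIdeal (finVar F N) n (r + 1)).map (Ideal.Quotient.mk I))
    {d : Fin (r + 1) → ℕ} (hd : StrictMono d) (hdn : d (Fin.last r) + 1 = n) :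
    ∃ φ : MvPolynomial (Fin N) F ⧸ I →+* Polynomial p.ResidueField,
      RingHom.ker φ ≤ p ∧ φ (Ideal.Quotient.mk I (hankelMinor (finVar F N) d)) ≠ 0 := by
  obtain ⟨z, hz, hz0, hzd⟩ := exists_residue_deformation hN hI hp hd hdn
  set ψ := eval₂Hom (Polynomial.C.comp <| (algebraMap _ p.ResidueField).comp <|
    (Ideal.Quotient.mk I).comp C) fun i : Fin N => z i
  have hψI : I ≤ RingHom.ker ψ := by
    refine hI.le.trans (Ideal.map_eq_bot_iff_le_ker ψ |>.1 ?_)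
    rw [map_hankelIdeal_finVar _ _ (by omega), hz0]
  set φ := Ideal.Quotient.lift I ψ hψI
  have hφ : ∀ f, φ (Ideal.Quotient.mk I f) = ψ f := fun _ => Ideal.Quotient.lift_mk I ψ hψI
  have hres : Polynomial.constantCoeff.comp φ = algebraMap _ p.ResidueField := by
    refine Ideal.Quotient.ringHom_ext (MvPolynomial.ringHom_ext (fun a => ?_) fun i => ?_)
    · simp [hφ, ψ]
    · simpa [hφ, ψ, finVar] using hz i
  refine ⟨φ, fun f hf => ?_, ?_⟩
  · rw [← Ideal.algebraMap_residueField_eq_zero, ← hres, RingHom.comp_apply,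
      RingHom.mem_ker.1 hf, map_zero]
  · rwa [hφ, map_hankelMinor_finVar _ _ fun j => by
      have := hd.monotone (Fin.le_last j)
      omega]

theorem algebraMap_hankelMinor_mem_pow_and_notMem_pow [IsDomain F] [p.IsPrime] (hN : n + r < N)
    (hI : I = hankelIdeal (finVar F N) n (r + 2))
    (hp : p = (hankelIdeal (finVar F N) n (r + 1)).map (Ideal.Quotient.mk I))
    (L : Type*) [CommRing L] [Algebra (MvPolynomial (Fin N) F ⧸ I) L] [IsLocalization.AtPrime L p]
    {c : Fin (r + 1) → ℕ} (hc : StrictMono c) {q : ℕ} (hcn : c (Fin.last r) + q + 1 = n) :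
    algebraMap _ L (Ideal.Quotient.mk I (hankelMinor (finVar F N) c)) ∈
        p.map (algebraMap _ L) ^ (q + 1) ∧
      algebraMap _ L (Ideal.Quotient.mk I (hankelMinor (finVar F N) c)) ∉
        p.map (algebraMap _ L) ^ (q + 1 + 1) := by
  have : IsLocalRing L := IsLocalization.AtPrime.isLocalRing L p
  set π := (algebraMap (MvPolynomial (Fin N) F ⧸ I) L).comp (Ideal.Quotient.mk I) with hπ
  have hcq : ∀ j, c j + q < n := fun j => by
    have := hc.monotone (Fin.le_last j)
    omega
  have hbot : hankelIdeal (fun m => π (finVar F N m)) n (r + 2) = ⊥ := by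
    rw [← map_hankelIdeal, ← hI, hπ, ← Ideal.map_map, Ideal.map_quotient_self, Ideal.map_bot]
  have hM : hankelIdeal (fun m => π (finVar F N m)) n (r + 1) = IsLocalRing.maximalIdeal L := by
    rw [← map_hankelIdeal, hπ, ← Ideal.map_map, ← hp,
      IsLocalization.AtPrime.map_eq_maximalIdeal p L]
  have hunit : IsUnit (hankelMinor (fun m => π (finVar F N m)) fun j => c j + q + 1) := by
    rw [← map_hankelMinor, hπ, RingHom.comp_apply, IsLocalization.AtPrime.isUnit_to_map_iff L p,
      Ideal.mem_primeCompl_iff, mk_mem_iff_mem_hankelIdeal hI hp]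
    exact hankelMinor_finVar_corner_notMem hN
      (fun i j hij => Nat.add_lt_add_right (hc hij) (q + 1)) hcn
  have hspan := span_hankelMinor_eq_pow hbot hcq hunit
  rw [← map_hankelMinor, hM] at hspan
  obtain ⟨φ, hφ, hφd⟩ := exists_hom_ker_le hN hI hp (d := fun j => c j + q)
    (fun i j hij => Nat.add_lt_add_right (hc hij) q) hcn
  have hdp := (mk_mem_iff_mem_hankelIdeal hI hp).2 (hankelMinor_mem_hankelIdeal (finVar F N) hcq)
  rw [IsLocalization.AtPrime.map_eq_maximalIdeal p L]
  exact ⟨hspan.le (Ideal.mem_span_singleton_self _), notMem_maximalIdeal_pow_succ hspan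
    (not_isNilpotent_maximalIdeal p φ hφ hdp hφd)⟩

end Valuation

lemma det_submatrix_eq_hankelMinor {A : Type*} [CommRing A] {t n k : ℕ}
    {H : Matrix (Fin t) (Fin n) A} {x : ℕ → A} (hH : ∀ a b, H a b = x (a + b))
    {f : Fin k → Fin t} (hf : ∀ i, (f i : ℕ) = i) (g : Fin k → Fin n) :
    (H.submatrix f g).det = hankelMinor x fun j => g j := by
  refine congrArg det (Matrix.ext fun i j => ?_)
  rw [submatrix_apply, hH, hf, hankelRows_apply]

theorem hankel_minor_valuation_general (F : Type*) [CommRing F] [IsDomain F] (t n : ℕ) (ht : 2 ≤ t)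
    (H : Matrix (Fin t) (Fin n) (MvPolynomial (Fin (n + t - 1)) F))
    (hH : ∀ a b, H a b = X ⟨(a : ℕ) + (b : ℕ), by have := a.2; have := b.2; omega⟩)
    (I : Ideal (MvPolynomial (Fin (n + t - 1)) F))
    (hI : I = Ideal.span (Set.range fun g : Fin t → Fin n => (H.submatrix id g).det))
    (p : Ideal (MvPolynomial (Fin (n + t - 1)) F ⧸ I))
    (hp : p = Ideal.span {x | ∃ g : Fin (t - 1) → Fin n,
      x = Ideal.Quotient.mk I
        ((H.submatrix (fun i : Fin (t - 1) => (⟨i.1, by have := i.2; omega⟩ : Fin t)) g).det)})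
    [hpp : p.IsPrime]
    (c : Fin (t - 1) → Fin n) (hc : StrictMono c)
    (δ : MvPolynomial (Fin (n + t - 1)) F ⧸ I)
    (hδ : δ = Ideal.Quotient.mk I
      ((H.submatrix (fun i : Fin (t - 1) => (⟨i.1, by have := i.2; omega⟩ : Fin t)) c).det))
    (L : Type*) [CommRing L] [Algebra (MvPolynomial (Fin (n + t - 1)) F ⧸ I) L]
    [IsLocalization.AtPrime L p] (M : Ideal L) (hM : M = Ideal.map (algebraMap _ _) p) :
    algebraMap _ L δ ∈ M ^ (n - (c ⟨t - 2, by omega⟩ : ℕ)) ∧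
    algebraMap _ L δ ∉ M ^ (n - (c ⟨t - 2, by omega⟩ : ℕ) + 1) := by
  obtain ⟨r, rfl⟩ : ∃ r, t = r + 2 := ⟨t - 2, by omega⟩
  set x := finVar F (n + (r + 2) - 1) with hx
  have hHx : ∀ a b, H a b = x (a + b) := fun a b => by rw [hH, hx, finVar, dif_pos]
  have hminor : ∀ g : Fin (r + 2 - 1) → Fin n,
      (H.submatrix (fun i : Fin (r + 2 - 1) => (⟨i.1, by omega⟩ : Fin (r + 2))) g).det =
        hankelMinor x fun j => g j :=
    det_submatrix_eq_hankelMinor hHx fun _ => rfl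
  have hI' : I = hankelIdeal x n (r + 2) := by
    simp only [hI, det_submatrix_eq_hankelMinor hHx (f := id) fun _ => rfl, hankelIdeal]
  have hp' : p = (hankelIdeal x n (r + 1)).map (Ideal.Quotient.mk I) := by
    simp only [hp, hminor, eq_comm (b := Ideal.Quotient.mk I _)]
    rw [hankelIdeal, Ideal.map_span, ← Set.range_comp]
    rfl
  obtain ⟨q, hq⟩ := Nat.exists_eq_add_of_lt (c (Fin.last r)).2
  have hexp : n - (c ⟨r + 2 - 2, by omega⟩ : ℕ) = q + 1 := by
    change n - (c (Fin.last r) : ℕ) = q + 1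
    omega
  rw [hexp, hM, hδ, hminor]
  exact algebraMap_hankelMinor_mem_pow_and_notMem_pow (by omega) hI' hp' L
    (c := fun j => c j) hc hq.symm

/-- Valuations of maximal minors of the first `t-1` rows of the Hankel matrix in the DVR `R_p`:
for columns `i_1 < ... < i_{t-1}` (here given by a strictly monotone `c`, 0-indexed), the minor
`[1 ... t-1 | i_1 ... i_{t-1}]` has valuation `n+1-i_{t-1}`, expressed by membership in exactly
the `(n+1-i_{t-1})`-st power of the maximal ideal `pR_p` of the localization `R_p`. -/
theorem hankel_minor_valuation (F : Type*) [Field F] (t n : ℕ) (ht : 2 ≤ t) (htn : t ≤ n)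
    (H : Matrix (Fin t) (Fin n) (MvPolynomial (Fin (n + t - 1)) F))
    (hH : ∀ a b, H a b = X ⟨(a : ℕ) + (b : ℕ), by have := a.2; have := b.2; omega⟩)
    (I : Ideal (MvPolynomial (Fin (n + t - 1)) F))
    (hI : I = Ideal.span (Set.range fun g : Fin t → Fin n => (H.submatrix id g).det))
    (p : Ideal (MvPolynomial (Fin (n + t - 1)) F ⧸ I))
    (hp : p = Ideal.span {x | ∃ g : Fin (t - 1) → Fin n,
      x = Ideal.Quotient.mk I
        ((H.submatrix (fun i : Fin (t - 1) => (⟨i.1, by have := i.2; omega⟩ : Fin t)) g).det)})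
    [hpp : p.IsPrime]
    (c : Fin (t - 1) → Fin n) (hc : StrictMono c)
    (δ : MvPolynomial (Fin (n + t - 1)) F ⧸ I)
    (hδ : δ = Ideal.Quotient.mk I
      ((H.submatrix (fun i : Fin (t - 1) => (⟨i.1, by have := i.2; omega⟩ : Fin t)) c).det))
    (M : Ideal (Localization.AtPrime p))
    (hM : M = Ideal.map (algebraMap _ _) p) :
    algebraMap _ (Localization.AtPrime p) δ ∈ M ^ (n - (c ⟨t - 2, by omega⟩ : ℕ)) ∧
    algebraMap _ (Localization.AtPrime p) δ ∉ M ^ (n - (c ⟨t - 2, by omega⟩ : ℕ) + 1) :=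
  hankel_minor_valuation_general F t n ht H hH I hI p hp c hc δ hδ (Localization.AtPrime p) M hM
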